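/- Let E be a real vector space, J a finite index set, u_i ∈ E, and for each j ∈ J let u_j, F_j ∈ E; let F_i ∈ E. Let c_j (j ∈ J) and c_self be real numbers with c_self + ∑_{j∈J} c_j = 0, let d_j > 0 for j ∈ J, and let m > 0, Δt > 0. Define the bar states ū_j = (u_i + u_j)/2 + (c_j/(2 d_j))·(F_j − F_i). Then the forward Euler update admits the convex-combination form: u_i + (Δt/m)·( ∑_{j∈J} c_j • F_j + c_self • F_i + ∑_{j∈J} d_j • (u_j − u_i) ) = (1 − ∑_{j∈J} 2Δt d_j/m)·u_i + ∑_{j∈J} (2Δt d_j/m)·ū_j. -/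

import Mathlib

/-- Rewriting of the low-order graph-viscosity forward Euler update as a convex
combination of the previous nodal value and the bar states
`ū_j = (u_i + u_j)/2 + (c_j/(2 d_j)) • (F_j - F_i)`. -/
theorem forward_euler_eq_convex_combination {E : Type*} [AddCommGroup E] [Module ℝ E]
    {ι : Type*} (J : Finset ι) (ui : E) (u F : ι → E) (Fi : E)
    (c : ι → ℝ) (cself : ℝ) (hc : cself + ∑ j ∈ J, c j = 0)
    (d : ι → ℝ) (hd : ∀ j ∈ J, 0 < d j)
    (m Δt : ℝ) (hm : 0 < m) (hΔt : 0 < Δt) :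
    ui + (Δt / m) • (∑ j ∈ J, c j • F j + cself • Fi + ∑ j ∈ J, d j • (u j - ui))
      = (1 - ∑ j ∈ J, 2 * Δt * d j / m) • ui
        + ∑ j ∈ J, (2 * Δt * d j / m) •
            ((1 / 2 : ℝ) • (ui + u j) + (c j / (2 * d j)) • (F j - Fi)) := by
  have key : ∀ j ∈ J, (2 * Δt * d j / m) •
      ((1 / 2 : ℝ) • (ui + u j) + (c j / (2 * d j)) • (F j - Fi))
      = (2 * Δt * d j / m) • ui
        + (Δt / m) • (c j • F j - c j • Fi + d j • (u j - ui)) := by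
    intro j hj
    have h : (2 * Δt * d j / m) * (c j / (2 * d j)) = (Δt / m) * c j := by
      have := (hd j hj).ne'
      field_simp
    rw [smul_add, smul_smul _ _ (F j - Fi), h]
    module
  have hs : cself = -∑ j ∈ J, c j := by linarith
  rw [Finset.sum_congr rfl key, Finset.sum_add_distrib, ← Finset.sum_smul,
    ← Finset.smul_sum, Finset.sum_add_distrib, Finset.sum_sub_distrib,
    ← Finset.sum_smul (f := c), hs]
  module
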